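/- Let u,v ∈ ℝ and Δ = (0, 1, u+vi) ∈ ℂ³. For t ∈ ℝ set Δ(t) := S[e^{−2πit}, e^{2πit}]·Δ. Then every vertex of Δ(t), written z = X + iY with X,Y ∈ ℝ, lies on the Steiner circumscribed ellipse: v²·(X − (1+u)/3)² + (v − 2uv)·(X − (1+u)/3)·(Y − v/3) + (1 − u + u²)·(Y − v/3)² = v²/3. -/

import Mathlib

noncomputable def ω : ℂ := Complex.exp (2 * Real.pi * Complex.I / 3)

def J : Matrix (Fin 3) (Fin 3) ℂ := !![0,1,0; 0,0,1; 1,0,0]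

noncomputable def W : Matrix (Fin 3) (Fin 3) ℂ := !![1,1,1; 1,ω,ω^2; 1,ω^2,ω]

/-- generalized cevian operator `S[η,η'] = W ⬝ diag(1,η',η) ⬝ W⁻¹` -/
noncomputable def S (η η' : ℂ) : Matrix (Fin 3) (Fin 3) ℂ :=
  W * Matrix.diagonal ![1, η', η] * W⁻¹

/-- `ω^k` for `k : ZMod 3` (well defined since `ω^3 = 1`). -/
noncomputable def ωz (k : ZMod 3) : ℂ := ω ^ k.val

/-- `J^k` for `k : ZMod 3` (well defined since `J^3 = 1`). -/
def Jz (k : ZMod 3) : Matrix (Fin 3) (Fin 3) ℂ := J ^ k.val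

/-- generalized median operator `M^{wx/yz}[η,η']` -/
noncomputable def M (η η' : ℂ) (w x y z : ZMod 3) : Matrix (Fin 3) (Fin 3) ℂ :=
  S ((η * ωz (-x) - ωz (-w)) / (ωz (-z) - ωz (-y)))
    ((η' * ωz x - ωz w) / (ωz z - ωz y))

/-!
Row `k` of `S[conj ζ, ζ]` consists of the real numbers `1/3 + 2/3 · Re (ζ ωᵏ ω⁻ʲ)`, `j = 0, 1, 2`,
so each vertex of the transformed triangle is given by real barycentric coordinates `1/3 + yⱼ` with
`∑ yⱼ = 0`. By Parseval `∑ yⱼ² = 2/3 · ‖ζ‖²`, independently of the direction of `ζ`.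
Up to the area of the triangle, `yⱼ` is the area spanned by an edge and the displacement from the
centroid, so `∑ yⱼ²` is a quadratic form in that displacement whose level sets are the ellipses
homothetic to the Steiner circumellipse.
-/

open scoped ComplexConjugate Matrix

section RootsOfUnity

variable {n : ℕ} {ρ : ℂ}

theorem sum_re_mul_pow_of_pow_eq_one (hρ : ρ ^ n = 1) (hρ_ne : ρ ≠ 1) (c : ℂ) :
    ∑ j : Fin n, (c * ρ ^ (j : ℕ)).re = 0 := by
  rw [← Complex.re_sum, ← Finset.mul_sum, Fin.sum_univ_eq_sum_range (ρ ^ ·), geom_sum_eq hρ_ne, hρ,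
    sub_self, zero_div, mul_zero, Complex.zero_re]

theorem re_sq_eq_norm_sq_add_re_sq_div_two (z : ℂ) : z.re ^ 2 = (‖z‖ ^ 2 + (z ^ 2).re) / 2 := by
  rw [Complex.sq_norm, Complex.normSq_apply, sq z, Complex.mul_re]
  ring

theorem sum_re_sq_mul_pow_of_pow_eq_one (hρ : ρ ^ n = 1) (hρ_sq_ne : ρ ^ 2 ≠ 1) (c : ℂ) :
    ∑ j : Fin n, (c * ρ ^ (j : ℕ)).re ^ 2 = n / 2 * ‖c‖ ^ 2 := by
  have norm_term (j : Fin n) : ‖c * ρ ^ (j : ℕ)‖ = ‖c‖ := by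
    have norm_ρ : ‖ρ‖ = 1 := Complex.norm_eq_one_of_pow_eq_one hρ j.pos.ne'
    rw [norm_mul, norm_pow, norm_ρ, one_pow, mul_one]
  have hρ_sq : (ρ ^ 2) ^ n = 1 := by rw [pow_right_comm, hρ, one_pow]
  calc ∑ j : Fin n, (c * ρ ^ (j : ℕ)).re ^ 2
      = (∑ _j : Fin n, ‖c‖ ^ 2 + ∑ j : Fin n, (c ^ 2 * (ρ ^ 2) ^ (j : ℕ)).re) / 2 := by
        simp only [re_sq_eq_norm_sq_add_re_sq_div_two, norm_term, mul_pow, pow_right_comm,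
          ← Finset.sum_add_distrib, Finset.sum_div]
    _ = n / 2 * ‖c‖ ^ 2 := by
        rw [sum_re_mul_pow_of_pow_eq_one hρ_sq hρ_sq_ne, Fin.sum_const, nsmul_eq_mul]
        ring

end RootsOfUnity

section AlternatingForm

variable {R E : Type*} [CommRing R] [AddCommGroup E] [Module R E] {B : E →ₗ[R] E →ₗ[R] R}

theorem isAlt_edge_edge (hB : B.IsAlt) (p : Fin 3 → E) (j : Fin 3) :
    B (p (j + 1) - p j) (p (j + 2) - p j) = B (p 1 - p 0) (p 2 - p 0) := by
  have rotate (a b c : E) : B (b - a) (c - a) = B (c - b) (a - b) := by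
    simp only [map_sub, LinearMap.sub_apply, hB.self_eq_zero, ← hB.neg a b, ← hB.neg a c,
      ← hB.neg b c]
    ring
  fin_cases j
  · rfl
  · exact (rotate _ _ _).symm
  · exact rotate _ _ _

theorem isAlt_edge_sum_smul (hB : B.IsAlt) {y : Fin 3 → R} (hy : ∑ i, y i = 0)
    (p : Fin 3 → E) (j : Fin 3) :
    B (p (j + 1) - p j) (∑ i, y i • p i) = y (j + 2) * B (p 1 - p 0) (p 2 - p 0) := by
  have sum_eq : ∑ i, y i • p i =
      y (j + 1) • (p (j + 1) - p j) + y (j + 2) • (p (j + 2) - p j) := by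
    have sum_sub : ∑ i, y i • p i = ∑ i, y i • (p i - p j) := by
      simp only [smul_sub, Finset.sum_sub_distrib, ← Finset.sum_smul, hy, zero_smul, sub_zero]
    rw [sum_sub, ← Equiv.sum_comp (Equiv.addLeft j), Fin.sum_univ_three]
    simp only [Equiv.coe_addLeft, add_zero, sub_self, smul_zero, zero_add]
  rw [sum_eq, map_add, map_smul, map_smul, hB.self_eq_zero, smul_zero, zero_add, smul_eq_mul,
    isAlt_edge_edge hB]

end AlternatingForm

theorem isPrimitiveRoot_ω : IsPrimitiveRoot ω 3 := Complex.isPrimitiveRoot_exp 3 three_ne_zero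

theorem conj_ω : conj ω = ω ^ 2 := by
  rw [← Complex.inv_eq_conj (isPrimitiveRoot_ω.norm'_eq_one three_ne_zero)]
  exact inv_eq_of_mul_eq_one_right (by rw [← pow_succ', isPrimitiveRoot_ω.pow_eq_one])

theorem W_mul_conjTranspose : W * Wᴴ = (3 : ℂ) • 1 := by
  have sum_pow_ω : 1 + ω + ω ^ 2 = 0 := by
    simpa [Finset.sum_range_succ] using isPrimitiveRoot_ω.geom_sum_eq_zero (by norm_num)
  ext i j
  fin_cases i <;> fin_cases j <;>
    simp [W, Matrix.mul_apply, Fin.sum_univ_three, conj_ω] <;> grind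

theorem W_inv : W⁻¹ = (3 : ℂ)⁻¹ • Wᴴ :=
  Matrix.inv_eq_right_inv <| by
    rw [Matrix.mul_smul, W_mul_conjTranspose, inv_smul_smul₀ three_ne_zero]

theorem W_apply_zero (i : Fin 3) : W i 0 = 1 := by
  fin_cases i <;> rfl

theorem W_apply_one (i : Fin 3) : W i 1 = ω ^ (i : ℕ) := by
  fin_cases i <;> simp [W]

theorem W_apply_two (i : Fin 3) : W i 2 = conj (ω ^ (i : ℕ)) := by
  have ω_cube : ω ^ 3 = 1 := isPrimitiveRoot_ω.pow_eq_one
  rw [map_pow, conj_ω]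
  fin_cases i
  · rfl
  · simp [W]
  · change ω = (ω ^ 2) ^ 2
    linear_combination -ω * ω_cube

theorem S_apply (η η' : ℂ) (i j : Fin 3) :
    S η η' i j = (1 + η' * (ω ^ (i : ℕ) * conj ω ^ (j : ℕ))
      + η * conj (ω ^ (i : ℕ) * conj ω ^ (j : ℕ))) / 3 := by
  rw [S, Matrix.mul_apply]
  simp only [W_inv, Matrix.mul_diagonal, Matrix.smul_apply, Matrix.conjTranspose_apply,
    Fin.sum_univ_three, W_apply_zero, W_apply_one, W_apply_two, Matrix.cons_val, smul_eq_mul,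
    RCLike.star_def, map_one, map_mul, map_pow, Complex.conj_conj]
  ring

theorem S_conj_apply (ζ : ℂ) (i j : Fin 3) :
    S (conj ζ) ζ i j = ((1 / 3 + (2 / 3 * ζ * ω ^ (i : ℕ) * conj ω ^ (j : ℕ)).re : ℝ) : ℂ) := by
  rw [S_apply, Complex.ofReal_add, Complex.re_eq_add_conj]
  simp only [map_mul, map_pow, map_div₀, map_ofNat, Complex.ofReal_div, Complex.ofReal_one,
    Complex.ofReal_ofNat]
  ring

attribute [local instance] Complex.finrank_real_complex_fact

/-- The quadratic form cutting out the Steiner ellipses of the triangle `Δ`: the sum of the squared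
(doubled, signed) areas spanned by an edge of `Δ` and the displacement of `z` from the centroid. -/
noncomputable def steinerForm (Δ : Fin 3 → ℂ) (z : ℂ) : ℝ :=
  ∑ j, Complex.orientation.areaForm (Δ (j + 1) - Δ j) (z - (∑ i, Δ i) / 3) ^ 2

theorem steinerForm_centroid_add_sum_smul (Δ : Fin 3 → ℂ) {y : Fin 3 → ℝ} (hy : ∑ i, y i = 0) :
    steinerForm Δ ((∑ i, Δ i) / 3 + ∑ i, y i • Δ i) =
      (∑ i, y i ^ 2) * Complex.orientation.areaForm (Δ 1 - Δ 0) (Δ 2 - Δ 0) ^ 2 := by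
  simp only [steinerForm, add_sub_cancel_left, mul_pow,
    isAlt_edge_sum_smul Complex.orientation.areaForm_apply_self hy, ← Finset.sum_mul]
  rw [← Equiv.sum_comp (Equiv.addRight (2 : Fin 3)) (y · ^ 2)]
  rfl

theorem S_conj_mulVec_apply (ζ : ℂ) (Δ : Fin 3 → ℂ) (k : Fin 3) :
    (S (conj ζ) ζ *ᵥ Δ) k = (∑ i, Δ i) / 3 +
      ∑ j : Fin 3, (2 / 3 * ζ * ω ^ (k : ℕ) * conj ω ^ (j : ℕ)).re • Δ j := by
  simp only [Matrix.mulVec, dotProduct, S_conj_apply, Complex.ofReal_add, add_mul,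
    Finset.sum_add_distrib, ← Finset.mul_sum, Complex.real_smul]
  push_cast
  ring

theorem steiner_ellipse_orbit_general (Δ : Fin 3 → ℂ) (ζ : ℂ) (k : Fin 3) :
    steinerForm Δ ((S (conj ζ) ζ *ᵥ Δ) k) =
      2 / 3 * ‖ζ‖ ^ 2 * Complex.orientation.areaForm (Δ 1 - Δ 0) (Δ 2 - Δ 0) ^ 2 := by
  have norm_ω : ‖ω‖ = 1 := isPrimitiveRoot_ω.norm'_eq_one three_ne_zero
  have conj_ω_root : IsPrimitiveRoot (conj ω) 3 :=
    isPrimitiveRoot_ω.map_of_injective (starRingEnd ℂ).injective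
  rw [S_conj_mulVec_apply, steinerForm_centroid_add_sum_smul Δ
      (sum_re_mul_pow_of_pow_eq_one conj_ω_root.pow_eq_one
        (conj_ω_root.ne_one (by norm_num)) _),
    sum_re_sq_mul_pow_of_pow_eq_one conj_ω_root.pow_eq_one
      (conj_ω_root.pow_ne_one_of_pos_of_lt two_ne_zero (by norm_num))]
  have norm_coeff : ‖2 / 3 * ζ * ω ^ (k : ℕ)‖ = 2 / 3 * ‖ζ‖ := by simp [norm_ω]
  rw [norm_coeff]
  push_cast
  ring

theorem steinerForm_zero_one (u v : ℝ) (z : ℂ) :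
    steinerForm ![0, 1, u + v * Complex.I] z =
      2 * (v ^ 2 * (z.re - (1 + u) / 3) ^ 2
        + (v - 2 * u * v) * (z.re - (1 + u) / 3) * (z.im - v / 3)
        + (1 - u + u ^ 2) * (z.im - v / 3) ^ 2) := by
  have centroid : (∑ i, ![0, 1, u + v * Complex.I] i) / 3 = ⟨(1 + u) / 3, v / 3⟩ := by
    apply Complex.ext <;> simp [Fin.sum_univ_three]
  simp only [steinerForm, centroid]
  simp only [Fin.sum_univ_three, Complex.areaForm, Complex.mul_im, Complex.conj_re,
    Complex.conj_im, Complex.sub_re, Complex.sub_im, Complex.add_re, Complex.add_im,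
    Complex.re_ofReal_mul, Complex.ofReal_re, Complex.ofReal_im, Complex.I_re, Complex.I_im,
    Complex.zero_re, Complex.zero_im, Complex.one_re, Complex.one_im, Fin.reduceAdd, zero_add,
    Matrix.cons_val]
  ring

theorem conj_exp_two_pi_I_mul (t : ℝ) :
    conj (Complex.exp (2 * Real.pi * Complex.I * t)) =
      Complex.exp (-(2 * Real.pi * Complex.I * t)) := by
  simp only [← Complex.exp_conj, map_mul, map_ofNat, Complex.conj_ofReal, Complex.conj_I, mul_neg,
    neg_mul]

theorem norm_exp_two_pi_I_mul (t : ℝ) : ‖Complex.exp (2 * Real.pi * Complex.I * t)‖ = 1 := by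
  simp [Complex.norm_exp]

theorem steiner_ellipse_orbit (u v : ℝ) (t : ℝ) (k : Fin 3) :
    let Δ : Fin 3 → ℂ := ![0, 1, (u : ℂ) + (v : ℂ) * Complex.I]
    let Δt : Fin 3 → ℂ :=
      (S (Complex.exp (-(2 * (Real.pi : ℂ) * Complex.I * (t : ℂ))))
         (Complex.exp (2 * (Real.pi : ℂ) * Complex.I * (t : ℂ)))).mulVec Δ
    let X : ℝ := (Δt k).re
    let Y : ℝ := (Δt k).im
    v ^ 2 * (X - (1 + u) / 3) ^ 2
      + (v - 2 * u * v) * (X - (1 + u) / 3) * (Y - v / 3)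
      + (1 - u + u ^ 2) * (Y - v / 3) ^ 2 = v ^ 2 / 3 := by
  intro Δ Δt X Y
  have area : Complex.orientation.areaForm (Δ 1 - Δ 0) (Δ 2 - Δ 0) = v := by
    simp [Δ, Complex.areaForm]
  have orbit := steiner_ellipse_orbit_general Δ (Complex.exp (2 * Real.pi * Complex.I * t)) k
  rw [conj_exp_two_pi_I_mul, norm_exp_two_pi_I_mul, steinerForm_zero_one, area] at orbit
  linear_combination orbit / 2
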